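/- arXiv:2512.10541 — 12 statements merged into one kernel-verified Lean document; each statement's English description precedes it below -/
import Mathlib

section
/- Let α, β ∈ ℝ with |β| ≤ α, and let n = (n1, n2, n3) ∈ ℝ³ with n1² + n2² + n3² = 1. Set c := (Real.sqrt (α+β) + Real.sqrt (α−β))/2, d := (Real.sqrt (α+β) − Real.sqrt (α−β))/2, and S := c • 1 + d • σ_n. Then S is Hermitian, S is positive semidefinite, and S * S = α • 1 + β • σ_n; i.e., S is the positive square root of the POVM element E1 = α • 1 + β • σ_n. -/
open Matrix ComplexOrder

noncomputable def σx : Matrix (Fin 2) (Fin 2) ℂ := !![0, 1; 1, 0]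
noncomputable def σy : Matrix (Fin 2) (Fin 2) ℂ := !![0, -Complex.I; Complex.I, 0]
noncomputable def σz : Matrix (Fin 2) (Fin 2) ℂ := !![1, 0; 0, -1]

/-- For `v = (v1, v2, v3) ∈ ℝ³`, `σ_v := v1 • σx + v2 • σy + v3 • σz`. -/
noncomputable def pauliVec (v : Fin 3 → ℝ) : Matrix (Fin 2) (Fin 2) ℂ :=
  v 0 • σx + v 1 • σy + v 2 • σz

theorem pauliVec_isHermitian (v : Fin 3 → ℝ) : (pauliVec v).IsHermitian := by
  ext i j
  fin_cases i <;> fin_cases j <;> simp [pauliVec, σx, σy, σz]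

theorem pauliVec_mul_self (v : Fin 3 → ℝ) :
    pauliVec v * pauliVec v =
      (v 0 ^ 2 + v 1 ^ 2 + v 2 ^ 2) • (1 : Matrix (Fin 2) (Fin 2) ℂ) := by
  ext i j
  fin_cases i <;> fin_cases j <;>
    simp [pauliVec, σx, σy, σz, Matrix.mul_apply, Fin.sum_univ_two] <;>
    ring_nf <;> simp

/-- If `A` is a Hermitian involution, then `1 + A` is twice an orthogonal projection. -/
theorem posSemidef_one_add_of_mul_self_eq_one {ι : Type*} [Fintype ι] [DecidableEq ι]
    {A : Matrix ι ι ℂ} (hA : A.IsHermitian) (h : A * A = 1) : (1 + A).PosSemidef := by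
  have key : 1 + A = (1 / 2 : ℝ) • ((1 + A)ᴴ * (1 + A)) := by
    rw [conjTranspose_add, conjTranspose_one, hA.eq, add_mul, mul_add, mul_add, h]
    simp only [one_mul, mul_one]
    module
  rw [key]
  exact (posSemidef_conjTranspose_mul_self _).smul (by norm_num)

theorem stmt_0 (α β : ℝ) (hβ : |β| ≤ α) (n : Fin 3 → ℝ)
    (hn : n 0 ^ 2 + n 1 ^ 2 + n 2 ^ 2 = 1)
    (c d : ℝ) (hc : c = (Real.sqrt (α + β) + Real.sqrt (α - β)) / 2)
    (hd : d = (Real.sqrt (α + β) - Real.sqrt (α - β)) / 2)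
    (S : Matrix (Fin 2) (Fin 2) ℂ)
    (hS : S = c • (1 : Matrix (Fin 2) (Fin 2) ℂ) + d • pauliVec n) :
    S.IsHermitian ∧ S.PosSemidef ∧
      S * S = α • (1 : Matrix (Fin 2) (Fin 2) ℂ) + β • pauliVec n := by
  have hsq : pauliVec n * pauliVec n = 1 := by rw [pauliVec_mul_self, hn, one_smul]
  have hH := pauliVec_isHermitian n
  obtain ⟨hneg, hpos⟩ := abs_le.mp hβ
  have hp := Real.sq_sqrt (show 0 ≤ α + β by linarith)
  have hq := Real.sq_sqrt (show 0 ≤ α - β by linarith)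
  have hpsd : S.PosSemidef := by
    have key : S = (√(α + β) / 2) • (1 + pauliVec n) + (√(α - β) / 2) • (1 + -pauliVec n) := by
      rw [hS, hc, hd]
      module
    rw [key]
    exact ((posSemidef_one_add_of_mul_self_eq_one hH hsq).smul (by positivity)).add
      ((posSemidef_one_add_of_mul_self_eq_one hH.neg (by rw [neg_mul_neg, hsq])).smul
        (by positivity))
  refine ⟨hpsd.isHermitian, hpsd, ?_⟩
  have hα : α = c ^ 2 + d ^ 2 := by rw [hc, hd]; linarith
  have hβ' : β = 2 * c * d := by rw [hc, hd]; linarith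
  rw [hS, hα, hβ', add_mul, mul_add, mul_add]
  simp only [smul_mul_assoc, mul_smul_comm, one_mul, mul_one, hsq]
  module
end

section
/- Let α, β ∈ ℝ with 0 ≤ β, β ≤ α and β ≤ 1−α, let n, u ∈ ℝ³ be unit vectors, and let r ∈ ℝ. Define S1 := ((√(α+β)+√(α−β))/2) • 1 + ((√(α+β)−√(α−β))/2) • σ_n and S2 := ((√(1−α−β)+√(1−α+β))/2) • 1 + ((√(1−α−β)−√(1−α+β))/2) • σ_n (the positive square roots of E1 and E2), and ρ := (1/2) • (1 + r • σ_u). Then S1 * ρ * S1 + S2 * ρ * S2 = (1/2) • (1 + (r·(n ⬝ u)) • σ_n + (r·h) • (σ_u − (n ⬝ u) • σ_n)), where h := √(α²−β²) + √((1−α)²−β²). This is the non-selective (outcome-forgotten) post-measurement state ρ_F. -/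
open Matrix

/-- Euclidean inner product on ℝ³. -/
def dot3 (v w : Fin 3 → ℝ) : ℝ := v 0 * w 0 + v 1 * w 1 + v 2 * w 2

theorem pauliVec_mul_self_s2 (n : Fin 3 → ℝ) (hn : n 0 ^ 2 + n 1 ^ 2 + n 2 ^ 2 = 1) :
    pauliVec n * pauliVec n = 1 := by
  have hc : (n 0 : ℂ) ^ 2 + (n 1 : ℂ) ^ 2 + (n 2 : ℂ) ^ 2 = 1 := by exact_mod_cast hn
  ext i j
  fin_cases i <;> fin_cases j <;>
    simp [pauliVec, σx, σy, σz, Matrix.mul_apply, Fin.sum_univ_two] <;>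
    grind [Complex.I_sq]

theorem pauliVec_anticomm (n u : Fin 3 → ℝ) :
    pauliVec n * pauliVec u = (2 * dot3 n u) • 1 - pauliVec u * pauliVec n := by
  ext i j
  fin_cases i <;> fin_cases j <;>
    simp [pauliVec, dot3, σx, σy, σz, Matrix.mul_apply, Fin.sum_univ_two] <;>
    grind [Complex.I_sq]

/-- The action of the Kraus operator `S` with eigenvalue `p` on the `+n` eigenspace and `q` on the
`-n` eigenspace of `σ_n`, applied to the Bloch state `(1 + r σ_u) / 2`. -/
theorem kraus_mul_bloch_mul_kraus (n u : Fin 3 → ℝ) (hn : n 0 ^ 2 + n 1 ^ 2 + n 2 ^ 2 = 1)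
    (p q r : ℝ) (S : Matrix (Fin 2) (Fin 2) ℂ)
    (hS : S = ((p + q) / 2) • (1 : Matrix (Fin 2) (Fin 2) ℂ) + ((p - q) / 2) • pauliVec n) :
    S * ((1 / 2 : ℝ) • ((1 : Matrix (Fin 2) (Fin 2) ℂ) + r • pauliVec u)) * S
      = (1 / 2 : ℝ) • (((p ^ 2 + q ^ 2) / 2) • (1 + (r * dot3 n u) • pauliVec n)
          + ((p ^ 2 - q ^ 2) / 2) • (pauliVec n + (r * dot3 n u) • 1)
          + (r * (p * q)) • (pauliVec u - dot3 n u • pauliVec n)) := by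
  subst hS
  simp only [mul_add, add_mul, smul_mul_assoc, mul_smul_comm, one_mul, mul_one, smul_add,
    pauliVec_anticomm n u, sub_mul, mul_assoc, pauliVec_mul_self_s2 n hn]
  module

theorem stmt_2 (α β r : ℝ) (hβ0 : 0 ≤ β) (hβα : β ≤ α) (hβα' : β ≤ 1 - α)
    (n u : Fin 3 → ℝ)
    (hn : n 0 ^ 2 + n 1 ^ 2 + n 2 ^ 2 = 1)
    (hu : u 0 ^ 2 + u 1 ^ 2 + u 2 ^ 2 = 1)
    (S1 S2 ρ : Matrix (Fin 2) (Fin 2) ℂ)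
    (hS1 : S1 = ((Real.sqrt (α + β) + Real.sqrt (α - β)) / 2) • (1 : Matrix (Fin 2) (Fin 2) ℂ)
        + ((Real.sqrt (α + β) - Real.sqrt (α - β)) / 2) • pauliVec n)
    (hS2 : S2 = ((Real.sqrt (1 - α - β) + Real.sqrt (1 - α + β)) / 2) • (1 : Matrix (Fin 2) (Fin 2) ℂ)
        + ((Real.sqrt (1 - α - β) - Real.sqrt (1 - α + β)) / 2) • pauliVec n)
    (hρ : ρ = (1 / 2 : ℝ) • ((1 : Matrix (Fin 2) (Fin 2) ℂ) + r • pauliVec u))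
    (h : ℝ) (hh : h = Real.sqrt (α ^ 2 - β ^ 2) + Real.sqrt ((1 - α) ^ 2 - β ^ 2)) :
    S1 * ρ * S1 + S2 * ρ * S2
      = (1 / 2 : ℝ) • ((1 : Matrix (Fin 2) (Fin 2) ℂ)
          + (r * dot3 n u) • pauliVec n
          + (r * h) • (pauliVec u - dot3 n u • pauliVec n)) := by
  subst hρ hh
  rw [kraus_mul_bloch_mul_kraus n u hn _ _ r S1 hS1, kraus_mul_bloch_mul_kraus n u hn _ _ r S2 hS2,
    Real.sq_sqrt (by linarith), Real.sq_sqrt (by linarith), Real.sq_sqrt (by linarith),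
    Real.sq_sqrt (by linarith), ← Real.sqrt_mul (by linarith), ← Real.sqrt_mul (by linarith),
    show (α + β) * (α - β) = α ^ 2 - β ^ 2 by ring,
    show (1 - α - β) * (1 - α + β) = (1 - α) ^ 2 - β ^ 2 by ring]
  module
end

section
/- Let λ0, λ1 ∈ ℝ with λ0 > 0, λ1 > 0, λ0 + λ1 = 1, and ρ := Matrix.diagonal ![ (λ0 : ℂ), (λ1 : ℂ) ]. Let A1, A2 be Hermitian 2×2 complex matrices with trace 0, and let L1, L2 be their SLDs relative to ρ (L_i μ ν := 2 · A_i μ ν / (λμ + λν)). Then Tr[ρ * (L1 * L2 − L2 * L1)] = (8 · (λ0 − λ1) · ((A1 0 1) * star (A2 0 1)).im) · Complex.I. In particular, the Uhlmann (achievability) quantity ½ Tr[ρ * (L1 L2 − L2 L1)] vanishes if and only if λ0 = λ1 or ((A1 0 1) * star (A2 0 1)).im = 0. -/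
open Matrix

/-- The symmetric logarithmic derivative of `A` relative to `ρ = diagonal ![λ0, λ1]`,
defined entrywise by `L μ ν = 2 ⬝ A μ ν / (λμ + λν)`. -/
noncomputable def sld (l0 l1 : ℝ) (A : Matrix (Fin 2) (Fin 2) ℂ) : Matrix (Fin 2) (Fin 2) ℂ :=
  Matrix.of fun μ ν => 2 * A μ ν / ((![l0, l1] μ + ![l0, l1] ν : ℝ) : ℂ)

theorem stmt_6 (l0 l1 : ℝ) (hl0 : 0 < l0) (hl1 : 0 < l1) (hsum : l0 + l1 = 1)
    (ρ : Matrix (Fin 2) (Fin 2) ℂ) (hρ : ρ = Matrix.diagonal ![(l0 : ℂ), (l1 : ℂ)])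
    (A1 A2 : Matrix (Fin 2) (Fin 2) ℂ)
    (hA1 : A1.IsHermitian) (hA2 : A2.IsHermitian)
    (hA1tr : A1.trace = 0) (hA2tr : A2.trace = 0)
    (L1 L2 : Matrix (Fin 2) (Fin 2) ℂ) (hL1 : L1 = sld l0 l1 A1) (hL2 : L2 = sld l0 l1 A2) :
    Matrix.trace (ρ * (L1 * L2 - L2 * L1))
        = ((8 * (l0 - l1) * (A1 0 1 * star (A2 0 1)).im : ℝ) : ℂ) * Complex.I ∧
      ((1 / 2 : ℂ) * Matrix.trace (ρ * (L1 * L2 - L2 * L1)) = 0 ↔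
        l0 = l1 ∨ (A1 0 1 * star (A2 0 1)).im = 0) := by
  have h10 : l1 + l0 = 1 := by rw [add_comm, hsum]
  have htr : Matrix.trace (ρ * (L1 * L2 - L2 * L1))
      = ((8 * (l0 - l1) * (A1 0 1 * star (A2 0 1)).im : ℝ) : ℂ) * Complex.I := by
    have e1 : L1 0 1 = 2 * A1 0 1 := by simp [hL1, sld, -Complex.ofReal_add, hsum]
    have e2 : L2 0 1 = 2 * A2 0 1 := by simp [hL2, sld, -Complex.ofReal_add, hsum]
    have f1 : L1 1 0 = 2 * star (A1 0 1) := by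
      rw [hA1.apply 1 0]
      simp [hL1, sld, -Complex.ofReal_add, h10]
    have f2 : L2 1 0 = 2 * star (A2 0 1) := by
      rw [hA2.apply 1 0]
      simp [hL2, sld, -Complex.ofReal_add, h10]
    rw [hρ, Matrix.trace_fin_two]
    simp only [Matrix.sub_apply, Matrix.mul_apply, Fin.sum_univ_two,
      e1, e2, f1, f2]
    apply Complex.ext <;> simp <;> ring
  refine ⟨htr, ?_⟩
  rw [htr]
  simp [-Complex.ofReal_mul, -Complex.ofReal_sub, sub_eq_zero]
end

section
/- Let λ0, λ1 ∈ ℝ with λ0 > 0, λ1 > 0, λ0 + λ1 = 1, and ρ := Matrix.diagonal ![ (λ0 : ℂ), (λ1 : ℂ) ]. Let A1, A2 be Hermitian 2×2 complex matrices with trace 0, and let L1, L2 be their SLDs relative to ρ. Then (1/2) · Tr[ρ * (L1 * L2 + L2 * L1)] = (((A1 0 0).re · (A2 0 0).re)/(λ0·λ1) + 4 · ((A1 0 1) * star (A2 0 1)).re : ℂ); i.e., the quantum Fisher information matrix entry equals u1·u2/(λ0λ1) + 4·Re(s1·conj(s2)), where u_i := (A_i 0 0).re and s_i := A_i 0 1.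 -/
open Matrix

theorem Matrix.eq_of_isHermitian_of_trace_eq_zero {A : Matrix (Fin 2) (Fin 2) ℂ}
    (hA : A.IsHermitian) (htr : A.trace = 0) :
    A = !![((A 0 0).re : ℂ), A 0 1; star (A 0 1), -((A 0 0).re : ℂ)] := by
  have h00 : ((A 0 0).re : ℂ) = A 0 0 := Complex.conj_eq_iff_re.mp (hA.apply 0 0)
  have h11 : A 1 1 = -A 0 0 := by
    rw [Matrix.trace_fin_two] at htr
    linear_combination htr
  ext i j
  fin_cases i <;> fin_cases j <;> simp [h00, h11, ← hA.apply 1 0]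

theorem sld_traceless_hermitian {l0 l1 : ℝ} (hsum : l0 + l1 = 1) (u : ℝ) (s : ℂ) :
    sld l0 l1 !![(u : ℂ), s; star s, -(u : ℂ)]
      = !![(u : ℂ) / l0, 2 * s; 2 * star s, -((u : ℂ) / l1)] := by
  have hsum' : (l0 : ℂ) + l1 = 1 := by exact_mod_cast hsum
  ext i j
  fin_cases i <;> fin_cases j <;>
    simp [sld, hsum', add_comm (l1 : ℂ) l0, ← two_mul, mul_div_mul_left, neg_div]

theorem stmt_7 (l0 l1 : ℝ) (hl0 : 0 < l0) (hl1 : 0 < l1) (hsum : l0 + l1 = 1)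
    (ρ : Matrix (Fin 2) (Fin 2) ℂ) (hρ : ρ = Matrix.diagonal ![(l0 : ℂ), (l1 : ℂ)])
    (A1 A2 : Matrix (Fin 2) (Fin 2) ℂ)
    (hA1 : A1.IsHermitian) (hA2 : A2.IsHermitian)
    (hA1tr : A1.trace = 0) (hA2tr : A2.trace = 0)
    (L1 L2 : Matrix (Fin 2) (Fin 2) ℂ) (hL1 : L1 = sld l0 l1 A1) (hL2 : L2 = sld l0 l1 A2) :
    (1 / 2 : ℂ) * Matrix.trace (ρ * (L1 * L2 + L2 * L1))
      = (((A1 0 0).re * (A2 0 0).re / (l0 * l1)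
          + 4 * (A1 0 1 * star (A2 0 1)).re : ℝ) : ℂ) := by
  have h0 : (l0 : ℂ) ≠ 0 := by exact_mod_cast hl0.ne'
  have h1 : (l1 : ℂ) ≠ 0 := by exact_mod_cast hl1.ne'
  have hsum' : (l1 : ℂ) = 1 - l0 := by
    rw [eq_sub_iff_add_eq', ← Complex.ofReal_add, hsum, Complex.ofReal_one]
  have hre : ((A1 0 1 * star (A2 0 1)).re : ℂ)
      = (A1 0 1 * star (A2 0 1) + star (A1 0 1) * A2 0 1) / 2 := by
    rw [Complex.re_eq_add_conj]
    simp
  rw [Complex.ofReal_add, Complex.ofReal_mul 4, hre, hρ, hL1, hL2,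
    Matrix.eq_of_isHermitian_of_trace_eq_zero hA1 hA1tr,
    Matrix.eq_of_isHermitian_of_trace_eq_zero hA2 hA2tr,
    sld_traceless_hermitian hsum, sld_traceless_hermitian hsum]
  simp [Matrix.trace_fin_two, Matrix.mul_apply, Fin.sum_univ_two]
  field_simp
  rw [hsum']
  ring
end

section
/- Let λ0, λ1 ∈ ℝ with λ0 > 0, λ1 > 0, λ0 + λ1 = 1, and ρ := Matrix.diagonal ![ (λ0 : ℂ), (λ1 : ℂ) ]. Let A1, A2 be Hermitian 2×2 complex matrices with trace 0, with SLDs L1, L2 relative to ρ, and let F be the QFIM. Writing u_i := (A_i 0 0).re and s_i := A_i 0 1, the determinant of F satisfies det F = (4/(λ0·λ1)) · Complex.normSq (u1 • s2 − u2 • s1) + 16 · ((s1 * star s2).im)². -/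
open Matrix

/-- The quantum Fisher information matrix of the pair of parameter-derivatives `A1, A2`
at the state `ρ = diagonal ![λ0, λ1]`:
`F i j = Re ((1/2) · Tr[ρ (L_i L_j + L_j L_i)])` where `L_i` is the SLD of `A_i`. -/
noncomputable def qfim (l0 l1 : ℝ) (A1 A2 : Matrix (Fin 2) (Fin 2) ℂ) :
    Matrix (Fin 2) (Fin 2) ℝ :=
  Matrix.of fun i j =>
    ((1 / 2 : ℂ) * Matrix.trace (Matrix.diagonal ![(l0 : ℂ), (l1 : ℂ)] *
      (![sld l0 l1 A1, sld l0 l1 A2] i * ![sld l0 l1 A1, sld l0 l1 A2] j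
        + ![sld l0 l1 A1, sld l0 l1 A2] j * ![sld l0 l1 A1, sld l0 l1 A2] i))).re

/-- The SLD of a traceless Hermitian matrix at a full-rank diagonal qubit state. -/
lemma sld_eq_of_isHermitian_of_trace_eq_zero {l0 l1 : ℝ} (hl0 : l0 ≠ 0) (hl1 : l1 ≠ 0)
    (hsum : l0 + l1 = 1) {A : Matrix (Fin 2) (Fin 2) ℂ} (hA : A.IsHermitian)
    (htr : A.trace = 0) :
    sld l0 l1 A = !![(((A 0 0).re / l0 : ℝ) : ℂ), 2 * A 0 1;
      2 * star (A 0 1), ((-(A 0 0).re / l1 : ℝ) : ℂ)] := by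
  have h00 : A 0 0 = ((A 0 0).re : ℂ) := (hA.coe_re_apply_self 0).symm
  have h10 : A 1 0 = star (A 0 1) := (hA.apply 1 0).symm
  have h11 : A 1 1 = -((A 0 0).re : ℂ) := by
    rw [Matrix.trace_fin_two] at htr
    rw [← h00]
    linear_combination htr
  have hc0 : (l0 : ℂ) ≠ 0 := by exact_mod_cast hl0
  have hc1 : (l1 : ℂ) ≠ 0 := by exact_mod_cast hl1
  have hsum' : l1 + l0 = 1 := by rw [add_comm, hsum]
  ext i j
  fin_cases i <;> fin_cases j
  · simp only [sld, Fin.zero_eta, of_apply, cons_val_zero, cons_val']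
    rw [h00]
    simp only [Complex.ofReal_re, Complex.ofReal_add, Complex.ofReal_div]
    field_simp
    norm_num [mul_comm]
  · simp [sld, -Complex.ofReal_add, hsum]
  · simp [sld, -Complex.ofReal_add, hsum', h10]
  · simp [sld, h11]
    field_simp
    ring

/-- The QFIM entry of a pair of traceless Hermitian matrices at a diagonal qubit state. -/
lemma half_trace_diagonal_mul_anticommutator_sld {l0 l1 : ℝ} (hl0 : l0 ≠ 0) (hl1 : l1 ≠ 0)
    (hsum : l0 + l1 = 1) {A B : Matrix (Fin 2) (Fin 2) ℂ} (hA : A.IsHermitian)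
    (hB : B.IsHermitian) (hAtr : A.trace = 0) (hBtr : B.trace = 0) :
    ((1 / 2 : ℂ) * Matrix.trace (Matrix.diagonal ![(l0 : ℂ), (l1 : ℂ)] *
      (sld l0 l1 A * sld l0 l1 B + sld l0 l1 B * sld l0 l1 A))).re
      = (A 0 0).re * (B 0 0).re / (l0 * l1) + 4 * (A 0 1 * star (B 0 1)).re := by
  rw [sld_eq_of_isHermitian_of_trace_eq_zero hl0 hl1 hsum hA hAtr,
    sld_eq_of_isHermitian_of_trace_eq_zero hl0 hl1 hsum hB hBtr]
  obtain rfl : l1 = 1 - l0 := by linarith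
  simp [Matrix.trace_fin_two, Matrix.mul_apply, Matrix.diagonal_apply,
    -Complex.ofReal_div, -Complex.ofReal_neg, -Complex.ofReal_sub]
  field_simp
  ring

theorem stmt_8 (l0 l1 : ℝ) (hl0 : 0 < l0) (hl1 : 0 < l1) (hsum : l0 + l1 = 1)
    (A1 A2 : Matrix (Fin 2) (Fin 2) ℂ)
    (hA1 : A1.IsHermitian) (hA2 : A2.IsHermitian)
    (hA1tr : A1.trace = 0) (hA2tr : A2.trace = 0)
    (u1 u2 : ℝ) (s1 s2 : ℂ)
    (hu1 : u1 = (A1 0 0).re) (hu2 : u2 = (A2 0 0).re)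
    (hs1 : s1 = A1 0 1) (hs2 : s2 = A2 0 1) :
    (qfim l0 l1 A1 A2).det
      = (4 / (l0 * l1)) * Complex.normSq (u1 • s2 - u2 • s1)
        + 16 * ((s1 * star s2).im) ^ 2 := by
  subst hu1 hu2 hs1 hs2
  have h0 := hl0.ne'
  have h1 := hl1.ne'
  rw [Matrix.det_fin_two]
  simp only [qfim, of_apply, cons_val_zero, cons_val_one,
    half_trace_diagonal_mul_anticommutator_sld h0 h1 hsum, hA1, hA2, hA1tr, hA2tr]
  simp [Complex.normSq_apply]
  field_simp
  ring
end

section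
/- Let λ0, λ1 ∈ ℝ with λ0 > 0, λ1 > 0, λ0 + λ1 = 1, and ρ := Matrix.diagonal ![ (λ0 : ℂ), (λ1 : ℂ) ]. Let A1, A2 be Hermitian 2×2 complex matrices with trace 0, with SLDs L1, L2 relative to ρ, and let F be the QFIM. Then det F = 0 if and only if A1 * A2 = A2 * A1; i.e., the quantum Fisher information matrix for two parameters with derivatives A1, A2 at a full-rank qubit state is singular exactly when the two derivatives commute. -/
open Matrix

/-- The traceless Hermitian matrix with Bloch coordinates `(x, y, a)`. -/
noncomputable def blochMatrix (a x y : ℝ) : Matrix (Fin 2) (Fin 2) ℂ :=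
  !![⟨a, 0⟩, ⟨x, y⟩; ⟨x, -y⟩, ⟨-a, 0⟩]

lemma exists_eq_blochMatrix {A : Matrix (Fin 2) (Fin 2) ℂ} (hA : A.IsHermitian)
    (htr : A.trace = 0) : ∃ a x y : ℝ, A = blochMatrix a x y := by
  have h00 := congrArg Complex.im (hA.apply 0 0)
  have h01 := hA.apply 1 0
  have h11 : A 1 1 = -A 0 0 := by
    rw [Matrix.trace_fin_two] at htr
    linear_combination htr
  have him : (A 0 0).im = 0 := by
    simp only [RCLike.star_def, Complex.conj_im] at h00
    linarith
  refine ⟨(A 0 0).re, (A 0 1).re, (A 0 1).im, ?_⟩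
  ext i j
  fin_cases i <;> fin_cases j <;>
    simp [blochMatrix, Complex.ext_iff, him, h11, ← h01]

/-- Two traceless Hermitian matrices commute exactly when their Bloch vectors are parallel. -/
lemma blochMatrix_commute_iff (a x y b u v : ℝ) :
    blochMatrix a x y * blochMatrix b u v = blochMatrix b u v * blochMatrix a x y ↔
      a * u - b * x = 0 ∧ a * v - b * y = 0 ∧ x * v - u * y = 0 := by
  simp only [blochMatrix, Matrix.mul_fin_two, ← Matrix.ext_iff, Fin.forall_fin_two]
  simp [Complex.ext_iff]
  constructor
  · rintro ⟨⟨⟨-, h3⟩, h1, h2⟩, -⟩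
    refine ⟨?_, ?_, ?_⟩ <;> linarith
  · rintro ⟨h1, h2, h3⟩
    refine ⟨⟨⟨?_, ?_⟩, ?_, ?_⟩, ⟨?_, ?_⟩, ?_, ?_⟩ <;> linarith

lemma sld_blochMatrix {l0 l1 : ℝ} (hl0 : l0 ≠ 0) (hl1 : l1 ≠ 0) (hsum : l0 + l1 = 1)
    (a x y : ℝ) :
    sld l0 l1 (blochMatrix a x y) =
      !![⟨a / l0, 0⟩, ⟨2 * x, 2 * y⟩; ⟨2 * x, -(2 * y)⟩, ⟨-(a / l1), 0⟩] := by
  have hsum' : l1 + l0 = 1 := by rw [add_comm, hsum]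
  ext i j
  fin_cases i <;> fin_cases j <;>
    simp only [sld, blochMatrix, Matrix.of_apply, Fin.zero_eta, Fin.mk_one, Fin.isValue,
      Matrix.cons_val_zero, Matrix.cons_val_one, Matrix.cons_val', Matrix.cons_val_fin_one,
      hsum, hsum', Complex.ext_iff, Complex.div_ofReal_re, Complex.div_ofReal_im] <;>
    simp <;> field_simp <;> ring

/-- The determinant of the quantum Fisher information matrix as a positive combination of the
squared components of the cross product of the Bloch vectors. -/
lemma det_qfim_blochMatrix {l0 l1 : ℝ} (hl0 : l0 ≠ 0) (hl1 : l1 ≠ 0) (hsum : l0 + l1 = 1)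
    (a x y b u v : ℝ) :
    (qfim l0 l1 (blochMatrix a x y) (blochMatrix b u v)).det =
      4 / (l0 * l1) * ((a * u - b * x) ^ 2 + (a * v - b * y) ^ 2) +
        16 * (x * v - u * y) ^ 2 := by
  obtain rfl : l1 = 1 - l0 := by linarith
  simp only [qfim, sld_blochMatrix hl0 hl1 hsum, Matrix.det_fin_two, Matrix.of_apply,
    Matrix.trace_fin_two, Matrix.diagonal_mul]
  simp
  field_simp
  ring

theorem stmt_9 (l0 l1 : ℝ) (hl0 : 0 < l0) (hl1 : 0 < l1) (hsum : l0 + l1 = 1)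
    (A1 A2 : Matrix (Fin 2) (Fin 2) ℂ)
    (hA1 : A1.IsHermitian) (hA2 : A2.IsHermitian)
    (hA1tr : A1.trace = 0) (hA2tr : A2.trace = 0) :
    (qfim l0 l1 A1 A2).det = 0 ↔ A1 * A2 = A2 * A1 := by
  obtain ⟨a, x, y, rfl⟩ := exists_eq_blochMatrix hA1 hA1tr
  obtain ⟨b, u, v, rfl⟩ := exists_eq_blochMatrix hA2 hA2tr
  rw [det_qfim_blochMatrix hl0.ne' hl1.ne' hsum, blochMatrix_commute_iff,
    add_eq_zero_iff_of_nonneg (by positivity) (by positivity), mul_eq_zero_iff_left (by positivity),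
    add_eq_zero_iff_of_nonneg (by positivity) (by positivity)]
  simp [and_assoc]
end

section
/- (Corollary 1 of the paper.) Let λ0, λ1 ∈ ℝ with λ0 > 0, λ1 > 0, λ0 + λ1 = 1 and λ0 ≠ λ1, and ρ := Matrix.diagonal ![ (λ0 : ℂ), (λ1 : ℂ) ]. Let m ∈ ℕ and let A : Fin m → Matrix (Fin 2) (Fin 2) ℂ be a family of Hermitian matrices with trace 0 (the derivatives of the encoded state with respect to the m parameters), with SLDs L i relative to ρ. Then the quantum Cramér–Rao bound achievability condition ∀ i j, Tr[ρ * (L i * L j − L j * L i)] = 0 holds if and only if ∀ i j, ((A i 0 1) * star (A j 0 1)).im = 0, i.e., the off-diagonal elements ⟨e0|A i|e1⟩ are pairwise real multiples of one another. -/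
open Matrix

/-- The trace of `ρ` against the commutator of two SLDs is determined by the imaginary part of the
product of the off-diagonal elements. -/
theorem trace_diagonal_mul_sld_commutator {l0 l1 : ℝ} (hsum : l0 + l1 = 1)
    {A B : Matrix (Fin 2) (Fin 2) ℂ} (hA : A.IsHermitian) (hB : B.IsHermitian) :
    Matrix.trace (Matrix.diagonal ![(l0 : ℂ), (l1 : ℂ)] *
        (sld l0 l1 A * sld l0 l1 B - sld l0 l1 B * sld l0 l1 A)) =
      8 * ((l0 - l1 : ℝ) : ℂ) * ((A 0 1 * star (B 0 1)).im : ℂ) * Complex.I := by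
  have hsub : A 0 1 * star (B 0 1) - B 0 1 * star (A 0 1) =
      2 * ((A 0 1 * star (B 0 1)).im : ℂ) * Complex.I := by
    apply Complex.ext <;> simp <;> ring
  have hsum' : (l0 : ℂ) + l1 = 1 := by exact_mod_cast hsum
  have hsum'' : (l1 : ℂ) + l0 = 1 := by rw [add_comm, hsum']
  have htrace : Matrix.trace (Matrix.diagonal ![(l0 : ℂ), (l1 : ℂ)] *
        (sld l0 l1 A * sld l0 l1 B - sld l0 l1 B * sld l0 l1 A)) =
      4 * ((l0 : ℂ) - l1) * (A 0 1 * B 1 0 - B 0 1 * A 1 0) := by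
    simp [Matrix.trace_fin_two, Matrix.mul_apply, Fin.sum_univ_two, sld, Matrix.diagonal_apply,
      hsum', hsum'']
    ring
  rw [htrace, ← hA.apply 1 0, ← hB.apply 1 0, hsub]
  push_cast
  ring

/-- Corollary 1 of the paper: the multiparameter QCRB achievability condition for qubit
probes holds iff the off-diagonal elements of the parameter-derivatives are pairwise real
multiples of one another. -/
theorem stmt_11 (l0 l1 : ℝ) (hl0 : 0 < l0) (hl1 : 0 < l1) (hsum : l0 + l1 = 1)
    (hne : l0 ≠ l1)
    (ρ : Matrix (Fin 2) (Fin 2) ℂ) (hρ : ρ = Matrix.diagonal ![(l0 : ℂ), (l1 : ℂ)])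
    (m : ℕ) (A : Fin m → Matrix (Fin 2) (Fin 2) ℂ)
    (hA : ∀ i, (A i).IsHermitian) (hAtr : ∀ i, (A i).trace = 0)
    (L : Fin m → Matrix (Fin 2) (Fin 2) ℂ) (hL : ∀ i, L i = sld l0 l1 (A i)) :
    (∀ i j, Matrix.trace (ρ * (L i * L j - L j * L i)) = 0) ↔
      (∀ i j, (A i 0 1 * star (A j 0 1)).im = 0) := by
  have hdiff : l0 - l1 ≠ 0 := sub_ne_zero.mpr hne
  refine forall_congr' fun i => forall_congr' fun j => ?_
  rw [hρ, hL i, hL j, trace_diagonal_mul_sld_commutator hsum (hA i) (hA j)]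
  simp only [mul_eq_zero, Complex.ofReal_eq_zero, Complex.I_ne_zero, hdiff, OfNat.ofNat_ne_zero,
    false_or, or_false]
end

section
/- Let λ0, λ1 ∈ ℝ with λ0 > 0, λ1 > 0, λ0 + λ1 = 1, and ρ := Matrix.diagonal ![ (λ0 : ℂ), (λ1 : ℂ) ]. Let A1, A2 be Hermitian 2×2 complex matrices with trace 0 all of whose entries are real (i.e., (A_i μ ν).im = 0 for all μ, ν), with SLDs L1, L2 relative to ρ. Then Tr[ρ * (L1 * L2 − L2 * L1)] = 0; i.e., when the encoded state and its parameter-derivatives are real Hermitian matrices, the achievability condition of the quantum Cramér–Rao bound is automatically satisfied. -/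
open Matrix

/-- The trace of a product of a symmetric matrix with the commutator of two symmetric matrices
vanishes. -/
theorem Matrix.IsSymm.trace_mul_commutator {n R : Type*} [Fintype n] [CommRing R]
    {S M N : Matrix n n R} (hS : S.IsSymm) (hM : M.IsSymm) (hN : N.IsSymm) :
    Matrix.trace (S * (M * N - N * M)) = 0 := by
  rw [mul_sub, trace_sub, sub_eq_zero, ← trace_transpose (S * (M * N)), transpose_mul,
    transpose_mul, hS.eq, hM.eq, hN.eq, trace_mul_comm]

/-- A Hermitian complex matrix with real entries is symmetric. -/
theorem Matrix.IsHermitian.isSymm_of_im_eq_zero {n : Type*} {A : Matrix n n ℂ}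
    (hA : A.IsHermitian) (hre : ∀ μ ν, (A μ ν).im = 0) : A.IsSymm :=
  IsSymm.ext fun μ ν => by rw [← hA.apply, Complex.star_def, Complex.conj_eq_iff_im.2 (hre _ _)]

/-- The symmetric logarithmic derivative of a symmetric matrix is symmetric. -/
theorem isSymm_sld (l0 l1 : ℝ) {A : Matrix (Fin 2) (Fin 2) ℂ} (hA : A.IsSymm) :
    (sld l0 l1 A).IsSymm :=
  IsSymm.ext fun μ ν => by simp only [sld, of_apply, hA.apply μ ν, add_comm]

theorem stmt_12 (l0 l1 : ℝ) (hl0 : 0 < l0) (hl1 : 0 < l1) (hsum : l0 + l1 = 1)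
    (ρ : Matrix (Fin 2) (Fin 2) ℂ) (hρ : ρ = Matrix.diagonal ![(l0 : ℂ), (l1 : ℂ)])
    (A1 A2 : Matrix (Fin 2) (Fin 2) ℂ)
    (hA1 : A1.IsHermitian) (hA2 : A2.IsHermitian)
    (hA1tr : A1.trace = 0) (hA2tr : A2.trace = 0)
    (hA1re : ∀ μ ν, (A1 μ ν).im = 0) (hA2re : ∀ μ ν, (A2 μ ν).im = 0)
    (L1 L2 : Matrix (Fin 2) (Fin 2) ℂ) (hL1 : L1 = sld l0 l1 A1) (hL2 : L2 = sld l0 l1 A2) :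
    Matrix.trace (ρ * (L1 * L2 - L2 * L1)) = 0 := by
  subst hρ hL1 hL2
  exact (isSymm_diagonal _).trace_mul_commutator
    (isSymm_sld l0 l1 (hA1.isSymm_of_im_eq_zero hA1re))
    (isSymm_sld l0 l1 (hA2.isSymm_of_im_eq_zero hA2re))
end

section
/- (Theorem 3 of the paper, outcome-remembered case.) Fix rx, ry, rz ∈ ℝ and define f : ℝ → ℝ → Matrix (Fin 2) (Fin 2) ℂ by f x1 x2 := (1/2) • (1 + ((x2 + rz·x1)/(x1 + x2·rz)) • σz + (√(x1²−x2²)/(x1 + x2·rz)) • (rx • σx + ry • σy)) (the post-measurement state ρ_f1 conditioned on outcome E1, with measurement coefficients α = x1, β = x2). Let (x1, x2) satisfy 0 < x2 < x1 and x1 + x2·rz ≠ 0, and let D1, D2 be the entrywise partial derivative matrices of f at (x1, x2). Then x1 • D1 + x2 • D2 = 0, and consequently D1 * D2 = D2 * D1; hence the two parameter-derivatives of ρ_f1 with respect to the measurement coefficients α and β are proportional and commute. -/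
open Matrix

/-- Entrywise partial derivative of a two-parameter family of matrices in the first
parameter, at `(x1, x2)`. -/
noncomputable def pderiv1 (f : ℝ → ℝ → Matrix (Fin 2) (Fin 2) ℂ) (x1 x2 : ℝ) :
    Matrix (Fin 2) (Fin 2) ℂ :=
  Matrix.of fun i j => deriv (fun t => f t x2 i j) x1

/-- Entrywise partial derivative of a two-parameter family of matrices in the second
parameter, at `(x1, x2)`. -/
noncomputable def pderiv2 (f : ℝ → ℝ → Matrix (Fin 2) (Fin 2) ℂ) (x1 x2 : ℝ) :
    Matrix (Fin 2) (Fin 2) ℂ :=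
  Matrix.of fun i j => deriv (fun t => f x1 t i j) x2

/-- Entrywise derivative of a half-sum of constant matrices with real differentiable coefficients. -/
lemma deriv_half_smul_one_add_entry {u v : ℝ → ℝ} {u' v' t : ℝ} (hu : HasDerivAt u u' t)
    (hv : HasDerivAt v v' t) (A B : Matrix (Fin 2) (Fin 2) ℂ) (i j : Fin 2) :
    deriv (fun s => ((1 / 2 : ℝ) • ((1 : Matrix (Fin 2) (Fin 2) ℂ) + u s • A + v s • B)) i j) t
      = ((1 / 2 : ℝ) • (u' • A + v' • B)) i j :=
  ((((hu.smul_const (A i j)).const_add ((1 : Matrix (Fin 2) (Fin 2) ℂ) i j)).add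
    (hv.smul_const (B i j))).const_smul (1 / 2 : ℝ)).deriv

/-- Matrices satisfying a linear relation with a nonzero coefficient commute. -/
lemma mul_comm_of_smul_add_smul_eq_zero {a b : ℝ} (ha : a ≠ 0) {A B : Matrix (Fin 2) (Fin 2) ℂ}
    (h : a • A + b • B = 0) : A * B = B * A := by
  have hA : A = (-(a⁻¹ * b)) • B := by
    rw [neg_smul, mul_smul, ← smul_neg, eq_inv_smul_iff₀ ha]
    exact eq_neg_of_add_eq_zero_left h
  rw [hA, smul_mul_assoc, mul_smul_comm]

theorem stmt_13 (rx ry rz : ℝ)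
    (f : ℝ → ℝ → Matrix (Fin 2) (Fin 2) ℂ)
    (hf : f = fun x1 x2 => (1 / 2 : ℝ) • ((1 : Matrix (Fin 2) (Fin 2) ℂ)
        + ((x2 + rz * x1) / (x1 + x2 * rz)) • σz
        + (Real.sqrt (x1 ^ 2 - x2 ^ 2) / (x1 + x2 * rz)) • (rx • σx + ry • σy)))
    (x1 x2 : ℝ) (hx2 : 0 < x2) (hx12 : x2 < x1) (hden : x1 + x2 * rz ≠ 0)
    (D1 D2 : Matrix (Fin 2) (Fin 2) ℂ)
    (hD1 : D1 = pderiv1 f x1 x2) (hD2 : D2 = pderiv2 f x1 x2) :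
    x1 • D1 + x2 • D2 = 0 ∧ D1 * D2 = D2 * D1 := by
  have hpos : 0 < x1 ^ 2 - x2 ^ 2 := by nlinarith
  have hs : √(x1 ^ 2 - x2 ^ 2) ≠ 0 := (Real.sqrt_pos.2 hpos).ne'
  have hsq : √(x1 ^ 2 - x2 ^ 2) ^ 2 = x1 ^ 2 - x2 ^ 2 := Real.sq_sqrt hpos.le
  have hN₁ : HasDerivAt (fun t : ℝ => t + x2 * rz) 1 x1 := (hasDerivAt_id x1).add_const _
  have hN₂ : HasDerivAt (fun t : ℝ => x1 + t * rz) rz x2 := by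
    simpa using ((hasDerivAt_id x2).mul_const rz).const_add x1
  have hM₁ : HasDerivAt (fun t : ℝ => x2 + rz * t) rz x1 := by
    simpa using ((hasDerivAt_id x1).const_mul rz).const_add x2
  have hM₂ : HasDerivAt (fun t : ℝ => t + rz * x1) 1 x2 := (hasDerivAt_id x2).add_const _
  have hS₁ : HasDerivAt (fun t : ℝ => √(t ^ 2 - x2 ^ 2)) _ x1 :=
    ((hasDerivAt_pow 2 x1).sub_const (x2 ^ 2)).sqrt hpos.ne'
  have hS₂ : HasDerivAt (fun t : ℝ => √(x1 ^ 2 - t ^ 2)) _ x2 :=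
    ((hasDerivAt_pow 2 x2).const_sub (x1 ^ 2)).sqrt hpos.ne'
  have hu₁ := hM₁.fun_div hN₁ hden
  have hu₂ := hM₂.fun_div hN₂ hden
  have hv₁ := hS₁.fun_div hN₁ hden
  have hv₂ := hS₂.fun_div hN₂ hden
  have hrel : x1 • D1 + x2 • D2 = 0 := by
    subst hD1 hD2 hf
    ext i j
    simp only [pderiv1, pderiv2, Matrix.add_apply, Matrix.smul_apply, Matrix.of_apply,
      Matrix.zero_apply]
    have h₁ := deriv_half_smul_one_add_entry hu₁ hv₁ σz (rx • σx + ry • σy) i j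
    have h₂ := deriv_half_smul_one_add_entry hu₂ hv₂ σz (rx • σx + ry • σy) i j
    simp only [Matrix.add_apply, Matrix.smul_apply] at h₁ h₂
    rw [h₁, h₂]
    match_scalars
    · field_simp
      rw [mul_zero, div_eq_zero_iff]
      left
      ring
    all_goals
      field_simp
      rw [hsq]
      ring
  exact ⟨hrel, mul_comm_of_smul_add_smul_eq_zero (hx2.trans hx12).ne' hrel⟩
end

section
/- (Case II of the paper, outcome E1.) Fix β, r ∈ ℝ and define f : ℝ → ℝ → Matrix (Fin 2) (Fin 2) ℂ by f x1 x2 := (1/2) • (1 + (r·√(1 − β²/x1²)) • (sin x2 • σx − cos x2 • σz) + (β/x1) • (cos x2 • σx + sin x2 • σz)) (the post-measurement state ρ_f1 for outcome E1 when the probe Bloch vector is orthogonal to the measurement direction n̂(θ) = (cos θ, 0, sin θ), with parameters α = x1 and θ = x2). Let (x1, x2) satisfy 0 < β < x1, and let D1, D2 be the entrywise partial derivative matrices of f at (x1, x2). Then D1 * D2 = D2 * D1 if and only if r² = 1. -/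
open Matrix

/-- Differentiating a path of density matrices with Bloch vector `(p t, 0, q t)` entrywise. -/
theorem deriv_bloch {p q : ℝ → ℝ} {p' q' x : ℝ} (hp : HasDerivAt p p' x)
    (hq : HasDerivAt q q' x) :
    (Matrix.of fun i j => deriv (fun t => ((1 / 2 : ℝ) • ((1 : Matrix (Fin 2) (Fin 2) ℂ)
      + p t • σx + q t • σz)) i j) x) = (1 / 2 : ℝ) • (p' • σx + q' • σz) := by
  have hp := hp.ofReal_comp
  have hq := hq.ofReal_comp
  ext i j
  rw [Matrix.of_apply]
  apply HasDerivAt.deriv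
  fin_cases i <;> fin_cases j <;> simp [σx, σz]
  · exact hq.const_mul _
  · exact hp.const_mul _
  · exact hp.const_mul _
  · exact (hq.const_mul _).neg

/-- Two real combinations of `σx` and `σz` commute iff their coefficient vectors are parallel. -/
theorem commute_bloch_iff (a b c d : ℝ) :
    ((1 / 2 : ℝ) • (a • σx + b • σz)) * ((1 / 2 : ℝ) • (c • σx + d • σz))
      = ((1 / 2 : ℝ) • (c • σx + d • σz)) * ((1 / 2 : ℝ) • (a • σx + b • σz))
      ↔ a * d = b * c := by
  constructor
  · intro h
    have h01 := congrArg Complex.re (congrFun (congrFun h 0) 1)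
    simp [σx, σz, Matrix.mul_apply] at h01
    linarith
  · intro h
    have hC : (a : ℂ) * d = b * c := by exact_mod_cast h
    ext i j
    fin_cases i <;> fin_cases j <;> simp [σx, σz, Matrix.mul_apply] <;> grind

theorem stmt_15 (β r : ℝ)
    (f : ℝ → ℝ → Matrix (Fin 2) (Fin 2) ℂ)
    (hf : f = fun x1 x2 => (1 / 2 : ℝ) • ((1 : Matrix (Fin 2) (Fin 2) ℂ)
        + (r * Real.sqrt (1 - β ^ 2 / x1 ^ 2)) • (Real.sin x2 • σx - Real.cos x2 • σz)
        + (β / x1) • (Real.cos x2 • σx + Real.sin x2 • σz)))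
    (x1 x2 : ℝ) (hβ : 0 < β) (hβx : β < x1)
    (D1 D2 : Matrix (Fin 2) (Fin 2) ℂ)
    (hD1 : D1 = pderiv1 f x1 x2) (hD2 : D2 = pderiv2 f x1 x2) :
    D1 * D2 = D2 * D1 ↔ r ^ 2 = 1 := by
  have hx : 0 < x1 := hβ.trans hβx
  have hf' : f = fun x1 x2 => (1 / 2 : ℝ) • ((1 : Matrix (Fin 2) (Fin 2) ℂ)
      + (r * √(1 - β ^ 2 / x1 ^ 2) * Real.sin x2 + β / x1 * Real.cos x2) • σx
      + (r * √(1 - β ^ 2 / x1 ^ 2) * -Real.cos x2 + β / x1 * Real.sin x2) • σz) := by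
    rw [hf]
    funext x1 x2
    module
  have hpos : 0 < 1 - β ^ 2 / x1 ^ 2 := by
    rw [sub_pos, div_lt_one (by positivity)]
    gcongr
  have hb : HasDerivAt (fun t : ℝ => β / t) (-β / x1 ^ 2) x1 := by
    simpa [div_eq_mul_inv] using (hasDerivAt_inv hx.ne').const_mul β
  have hs : HasDerivAt (fun t : ℝ => √(1 - β ^ 2 / t ^ 2))
      (β ^ 2 / x1 ^ 3 / √(1 - β ^ 2 / x1 ^ 2)) x1 := by
    have h : HasDerivAt (fun t : ℝ => 1 - β ^ 2 / t ^ 2) (2 * (β ^ 2 / x1 ^ 3)) x1 := by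
      have h := (hb.pow 2).const_sub 1
      simp only [Pi.pow_def, div_pow] at h
      refine h.congr_deriv ?_
      field_simp
      ring
    refine (h.sqrt hpos.ne').congr_deriv ?_
    exact mul_div_mul_left _ _ two_ne_zero
  have ha := hs.const_mul r
  have hsin := Real.hasDerivAt_sin x2
  have hcos := Real.hasDerivAt_cos x2
  rw [hf'] at hD1 hD2
  have h1 := hD1.trans <|
    deriv_bloch ((ha.mul_const (Real.sin x2)).add (hb.mul_const (Real.cos x2)))
      ((ha.mul_const (-Real.cos x2)).add (hb.mul_const (Real.sin x2)))
  have h2 := hD2.trans <|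
    deriv_bloch
      ((hsin.const_mul (r * √(1 - β ^ 2 / x1 ^ 2))).add (hcos.const_mul (β / x1)))
      ((hcos.neg.const_mul (r * √(1 - β ^ 2 / x1 ^ 2))).add (hsin.const_mul (β / x1)))
  rw [h1, h2, commute_bloch_iff]
  have hs0 : √(1 - β ^ 2 / x1 ^ 2) ≠ 0 := (Real.sqrt_pos.2 hpos).ne'
  generalize √(1 - β ^ 2 / x1 ^ 2) = s at hs0
  have hk : β ^ 2 / x1 ^ 3 ≠ 0 := by positivity
  have key : (r * (β ^ 2 / x1 ^ 3 / s) * Real.sin x2 + -β / x1 ^ 2 * Real.cos x2)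
        * (r * s * -(-Real.sin x2) + β / x1 * Real.cos x2)
      - (r * (β ^ 2 / x1 ^ 3 / s) * -Real.cos x2 + -β / x1 ^ 2 * Real.sin x2)
        * (r * s * Real.cos x2 + β / x1 * -Real.sin x2)
      = β ^ 2 / x1 ^ 3 * (r ^ 2 - 1) := by
    have hsc := Real.sin_sq_add_cos_sq x2
    field_simp
    linear_combination β * x1 * s * (r ^ 2 - 1) * hsc
  rw [← sub_eq_zero, key, mul_eq_zero, or_iff_right hk, sub_eq_zero]
end

section
/- (Case II of the paper, outcome E2.) Fix β, r ∈ ℝ and define f : ℝ → ℝ → Matrix (Fin 2) (Fin 2) ℂ by f x1 x2 := (1/2) • (1 + (r·√(1 − β²/(1−x1)²)) • (sin x2 • σx − cos x2 • σz) − (β/(1−x1)) • (cos x2 • σx + sin x2 • σz)) (the post-measurement state ρ_f2 for outcome E2 when the probe Bloch vector is orthogonal to the measurement direction n̂(θ) = (cos θ, 0, sin θ), with parameters α = x1 and θ = x2). Let (x1, x2) satisfy x1 < 1 and 0 < β < 1−x1, and let D1, D2 be the entrywise partial derivative matrices of f at (x1, x2). Then D1 * D2 = D2 * D1 if and only if r²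 = 1. -/
open Matrix

/-- A real combination of `σx` and `σz` commutes with another one exactly when the
coefficient vectors are parallel. -/
theorem commute_smul_σx_add_smul_σz_iff (a b c d : ℝ) :
    (a • σx + b • σz) * (c • σx + d • σz) = (c • σx + d • σz) * (a • σx + b • σz) ↔
      a * d = b * c := by
  constructor
  · intro h
    have h01 := congrFun (congrFun h 0) 1
    simp [σx, σz, Matrix.mul_apply, Fin.sum_univ_two] at h01
    have h01' : (-(a * d) + b * c : ℝ) = -(c * b) + d * a := by
      exact_mod_cast (by linear_combination h01 :
        (-(a * d) + b * c : ℂ) = -(c * b) + d * a)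
    linarith
  · intro h
    have hC : (a * d : ℂ) = b * c := by exact_mod_cast h
    ext i j
    fin_cases i <;> fin_cases j <;>
      simp [σx, σz, Matrix.mul_apply, Fin.sum_univ_two]
    · ring
    · linear_combination -2 * hC
    · linear_combination 2 * hC
    · ring

/-- Entrywise derivative of a curve of states whose Bloch vector is `(X, 0, Z)`. -/
theorem of_deriv_bloch_curve {X Z : ℝ → ℝ} {X' Z' t : ℝ}
    (hX : HasDerivAt X X' t) (hZ : HasDerivAt Z Z' t) :
    (Matrix.of fun i j => deriv (fun s =>
      ((1 / 2 : ℝ) • ((1 : Matrix (Fin 2) (Fin 2) ℂ) + (X s • σx + Z s • σz))) i j) t) =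
      (X' / 2) • σx + (Z' / 2) • σz := by
  have hXC := hX.ofReal_comp
  have hZC := hZ.ofReal_comp
  ext i j
  rw [Matrix.of_apply]
  apply HasDerivAt.deriv
  fin_cases i <;> fin_cases j <;> simp [σx, σz]
  · refine (hZC.const_mul (2⁻¹ : ℂ)).congr_deriv ?_
    ring
  · refine (hXC.const_mul (2⁻¹ : ℂ)).congr_deriv ?_
    ring
  · refine (hXC.const_mul (2⁻¹ : ℂ)).congr_deriv ?_
    ring
  · refine (hZC.const_mul (2⁻¹ : ℂ)).neg.congr_deriv ?_
    ring

theorem stmt_16 (β r : ℝ)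
    (f : ℝ → ℝ → Matrix (Fin 2) (Fin 2) ℂ)
    (hf : f = fun x1 x2 => (1 / 2 : ℝ) • ((1 : Matrix (Fin 2) (Fin 2) ℂ)
        + (r * Real.sqrt (1 - β ^ 2 / (1 - x1) ^ 2)) •
            (Real.sin x2 • σx - Real.cos x2 • σz)
        - (β / (1 - x1)) • (Real.cos x2 • σx + Real.sin x2 • σz)))
    (x1 x2 : ℝ) (hx1 : x1 < 1) (hβ : 0 < β) (hβx : β < 1 - x1)
    (D1 D2 : Matrix (Fin 2) (Fin 2) ℂ)
    (hD1 : D1 = pderiv1 f x1 x2) (hD2 : D2 = pderiv2 f x1 x2) :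
    D1 * D2 = D2 * D1 ↔ r ^ 2 = 1 := by
  have hpos : 0 < 1 - x1 := by linarith
  have hne : 1 - x1 ≠ 0 := hpos.ne'
  set b : ℝ := β / (1 - x1) with hb
  set b' : ℝ := β / (1 - x1) ^ 2 with hb'
  have hb_pos : 0 < b := div_pos hβ hpos
  have hb'_pos : 0 < b' := by positivity
  have hb_lt : b < 1 := (div_lt_one hpos).2 hβx
  have hrad : 0 < 1 - β ^ 2 / (1 - x1) ^ 2 := by
    rw [← div_pow]
    nlinarith
  set q : ℝ := √(1 - β ^ 2 / (1 - x1) ^ 2) with hq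
  have hq_ne : q ≠ 0 := (Real.sqrt_pos.2 hrad).ne'
  have hlin : HasDerivAt (fun t : ℝ => 1 - t) (-1) x1 := (hasDerivAt_id x1).const_sub 1
  have hB : HasDerivAt (fun t : ℝ => β / (1 - t)) b' x1 := by
    refine ((hasDerivAt_const x1 β).div hlin hne).congr_deriv ?_
    rw [hb']
    ring
  have hQ : HasDerivAt (fun t : ℝ => √(1 - β ^ 2 / (1 - t) ^ 2)) (-(b * b') / q) x1 := by
    have h := ((hB.pow 2).const_sub 1).sqrt (by simpa [div_pow] using hrad.ne')
    simp only [Pi.pow_apply, div_pow] at h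
    refine h.congr_deriv ?_
    rw [← hq, hb]
    field_simp
    norm_num
    ring
  have hA := hQ.const_mul r
  have hD1' := of_deriv_bloch_curve
    ((hA.mul_const (Real.sin x2)).sub (hB.mul_const (Real.cos x2)))
    ((hA.mul_const (Real.cos x2)).neg.sub (hB.mul_const (Real.sin x2)))
  have hs := Real.hasDerivAt_sin x2
  have hc := Real.hasDerivAt_cos x2
  have hD2' := of_deriv_bloch_curve
    ((hs.const_mul (r * q)).sub (hc.const_mul b))
    ((hc.const_mul (r * q)).neg.sub (hs.const_mul b))
  have hf' : ∀ t s, f t s = (1 / 2 : ℝ) • ((1 : Matrix (Fin 2) (Fin 2) ℂ) +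
      ((r * √(1 - β ^ 2 / (1 - t) ^ 2) * Real.sin s - β / (1 - t) * Real.cos s) • σx +
        (-(r * √(1 - β ^ 2 / (1 - t) ^ 2) * Real.cos s) - β / (1 - t) * Real.sin s) • σz)) := by
    intro t s
    rw [hf]
    module
  have e1 := hD1.trans (Eq.trans (by simp only [pderiv1, hf']; rfl) hD1')
  have e2 := hD2.trans (Eq.trans (by simp only [pderiv2, hf']; rfl) hD2')
  rw [e1, e2, commute_smul_σx_add_smul_σz_iff]
  have hsc := Real.sin_sq_add_cos_sq x2
  have hcancel : -(b * b') / q * q = -(b * b') := div_mul_cancel₀ _ hq_ne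
  generalize -(b * b') / q = q' at hcancel ⊢
  have hbb : b * b' ≠ 0 := (mul_pos hb_pos hb'_pos).ne'
  constructor
  · intro h
    apply mul_left_cancel₀ hbb
    linear_combination (-4) * h + (r ^ 2 * q' * q + b * b') * hsc + r ^ 2 * hcancel
  · intro h
    linear_combination (r ^ 2 * q' * q + b * b') / 4 * hsc + r ^ 2 / 4 * hcancel - b * b' / 4 * h
end

section
/- (Step I of Theorem 1 of the paper: forgetting the outcomes is always at least as precise for estimating the coefficient of the traceless part.) Let α, x, φ ∈ ℝ with 0 < α < 1, 0 < x < α, x < 1−α and 0 < φ < π. Set h := √(α²−x²) + √((1−α)²−x²). Then √(α²−x²)·√((1−α)²−x²)·√(1−h²)/(x·h) ≤ √(α²−x²)·(α + x·cos φ)²/(α·sin φ) + √((1−α)²−x²)·(1−α − x·cos φ)²/((1−α)·sin φ); i.e., the optimal outcome-forgotten error for estimating β = x is at most the outcome-remembered error for every pure qubit probe with polar angle φ. -/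
/-- Completing the square in `y` bounds the outcome-remembered numerator from below,
uniformly in the probe; here `h` and `u` are the sum and difference of the two square roots. -/
lemma remembered_numerator_lower_bound {h u : ℝ} (y : ℝ) (hh0 : 0 < h) (hh1 : h < 1)
    (hu : u ^ 2 < h ^ 2) :
    (h ^ 2 - u ^ 2) * (2 - u ^ 2) / (4 * h * (1 - u ^ 2)) ≤
      (h + u) / 2 * ((1 + u * h) / 2 + y) ^ 2 / ((1 + u * h) / 2) +
        (h - u) / 2 * ((1 - u * h) / 2 - y) ^ 2 / ((1 - u * h) / 2) := by
  have hu1 : 0 < 1 - u ^ 2 := by nlinarith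
  have huh := abs_lt.mp (abs_lt_of_sq_lt_sq hu hh0.le)
  have hp : 0 < 1 + u * h := by nlinarith
  have hm : 0 < 1 - u * h := by nlinarith
  have key : (h + u) / 2 * ((1 + u * h) / 2 + y) ^ 2 / ((1 + u * h) / 2) +
        (h - u) / 2 * ((1 - u * h) / 2 - y) ^ 2 / ((1 - u * h) / 2) -
      (h ^ 2 - u ^ 2) * (2 - u ^ 2) / (4 * h * (1 - u ^ 2)) =
      2 * h * (1 - u ^ 2) / ((1 + u * h) * (1 - u * h)) *
          (y + u * ((1 + u * h) * (1 - u * h)) / (2 * h * (1 - u ^ 2))) ^ 2 +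
        u ^ 2 * (h ^ 2 - u ^ 2) / (4 * h * (1 - u ^ 2)) := by
    have hp' : 1 + h * u ≠ 0 := by rw [mul_comm]; exact hp.ne'
    have hm' : 1 - h * u ≠ 0 := by rw [mul_comm]; exact hm.ne'
    field_simp
    ring
  have hd : 0 < h ^ 2 - u ^ 2 := by linarith
  rw [← sub_nonneg, key]
  positivity

/-- The outcome-forgotten error is at most the rational lower bound of
`remembered_numerator_lower_bound`. -/
lemma forgotten_error_upper_bound {h u w : ℝ} (hh0 : 0 < h) (hw0 : 0 < w)
    (hw : w ^ 2 = 1 - u ^ 2) (hu : u ^ 2 < h ^ 2) :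
    (h ^ 2 - u ^ 2) / (2 * h * w) ≤
      (h ^ 2 - u ^ 2) * (2 - u ^ 2) / (4 * h * (1 - u ^ 2)) := by
  have key : (h ^ 2 - u ^ 2) * (2 - u ^ 2) / (4 * h * (1 - u ^ 2)) -
      (h ^ 2 - u ^ 2) / (2 * h * w) =
      (h ^ 2 - u ^ 2) * (1 - w) ^ 2 / (4 * h * w ^ 2) := by
    rw [← hw, show 2 - u ^ 2 = 1 + w ^ 2 by linarith]
    field_simp
    ring
  have hd : 0 < h ^ 2 - u ^ 2 := by linarith
  rw [← sub_nonneg, key]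
  positivity

/-- Step I of Theorem 1 of the paper: for estimating the coefficient `β = x` of the
traceless part of the POVM, the optimal outcome-forgotten error is at most the
outcome-remembered error for every pure qubit probe with polar angle `φ`. -/
theorem stmt_18 (α x φ : ℝ)
    (hα0 : 0 < α) (hα1 : α < 1) (hx0 : 0 < x) (hxα : x < α) (hxα' : x < 1 - α)
    (hφ0 : 0 < φ) (hφπ : φ < Real.pi)
    (h : ℝ) (hh : h = Real.sqrt (α ^ 2 - x ^ 2) + Real.sqrt ((1 - α) ^ 2 - x ^ 2)) :
    Real.sqrt (α ^ 2 - x ^ 2) * Real.sqrt ((1 - α) ^ 2 - x ^ 2) *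
        Real.sqrt (1 - h ^ 2) / (x * h)
      ≤ Real.sqrt (α ^ 2 - x ^ 2) * (α + x * Real.cos φ) ^ 2 / (α * Real.sin φ)
        + Real.sqrt ((1 - α) ^ 2 - x ^ 2) * (1 - α - x * Real.cos φ) ^ 2
            / ((1 - α) * Real.sin φ) := by
  have hPpos : 0 < α ^ 2 - x ^ 2 := by nlinarith
  have hQpos : 0 < (1 - α) ^ 2 - x ^ 2 := by nlinarith
  have hP2 := Real.sq_sqrt hPpos.le
  have hQ2 := Real.sq_sqrt hQpos.le
  have hP0 := Real.sqrt_pos.mpr hPpos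
  have hQ0 := Real.sqrt_pos.mpr hQpos
  set P := Real.sqrt (α ^ 2 - x ^ 2)
  set Q := Real.sqrt ((1 - α) ^ 2 - x ^ 2)
  have hPα : P < α := by nlinarith
  have hQα : Q < 1 - α := by nlinarith
  obtain ⟨u, hu⟩ : ∃ u, u = P - Q := ⟨_, rfl⟩
  have hh0 : 0 < h := by linarith
  have hh1 : h < 1 := by linarith
  have hPe : P = (h + u) / 2 := by linarith
  have hQe : Q = (h - u) / 2 := by linarith
  have hαe : α = (1 + u * h) / 2 := by rw [hu, hh]; linarith
  have hβe : 1 - α = (1 - u * h) / 2 := by linarith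
  have huh : u ^ 2 < h ^ 2 := by rw [hu, hh]; nlinarith [mul_pos hP0 hQ0]
  have hk : 0 < 1 - h ^ 2 := by nlinarith
  have hv : 0 < 1 - u ^ 2 := by linarith
  have hx2 : x ^ 2 = (1 - h ^ 2) * (1 - u ^ 2) / 4 := by
    rw [hPe, hαe] at hP2
    linarith
  have hk2 := Real.sq_sqrt hk.le
  have hw2 := Real.sq_sqrt hv.le
  have hk0 := Real.sqrt_pos.mpr hk
  have hw0 := Real.sqrt_pos.mpr hv
  set k := Real.sqrt (1 - h ^ 2)
  set w := Real.sqrt (1 - u ^ 2)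
  have hxe : x = k * w / 2 := by
    rw [← sq_eq_sq₀ hx0.le (by positivity), hx2, ← hk2, ← hw2]
    ring
  have hleft : P * Q * k / (x * h) = (h ^ 2 - u ^ 2) / (2 * h * w) := by
    rw [hPe, hQe, hxe]
    field_simp
    ring
  have hnum := (forgotten_error_upper_bound hh0 hw0 hw2 huh).trans
    (remembered_numerator_lower_bound (x * Real.cos φ) hh0 hh1 huh)
  rw [← hleft, ← hPe, ← hQe, ← hαe, ← hβe] at hnum
  have hs0 : 0 < Real.sin φ := Real.sin_pos_of_pos_of_lt_pi hφ0 hφπ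
  rw [← div_div _ α, ← div_div _ (1 - α), ← add_div, le_div_iff₀ hs0]
  exact (mul_le_of_le_one_right (by positivity) (Real.sin_le_one φ)).trans hnum
end
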